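/- Let A, B ∈ ℚ and let f(z) = z³ + Az + B, viewed as a polynomial map ℂ → ℂ. If f is post-critically finite (every z ∈ ℂ with 3z² + A = 0 has finite forward orbit under f), then (A, B) is one of the seven pairs (−3, 0), (−3/2, 0), (−3/4, 3/4), (−3/4, −3/4), (0, 0), (3/2, 0), (3, 0). -/

import Mathlib

/-!
Write `a` for a critical point, so that `A = -3a²`, and recall `f(±a) = B ∓ 2a³`. A point whose
orbit is finite cannot lie in a region where every iteration of `f` strictly enlarges an absolute
value (`not_escaping_of_finiteOrbit`). This is used at all places of `ℂ`.

* Nonarchimedean (`valuation_bounds`). For a valuation subring of `ℂ` with valuation `v`, let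
  `R = max(1, v a, v(B)^{1/3})`. If `v z > R` then `v (f z) = v(z)³ > v z`, so points of finite orbit
  satisfy `v z ≤ R`. Applied to `f(a) ± f(-a)`, i.e. to `2B` and `4a³`, this forces `v(2) R ≤ 1`.
  As the integral closure of `ℤ` is the intersection of all valuation subrings, `2z` is an algebraic
  integer for every `z` of finite orbit, and so is `4B`. In particular
  `A = 3k/4` and `B = m/4` with `k, m ∈ ℤ`.
* Archimedean (`norm_sq_le_of_finiteOrbit`). Points of finite orbit satisfy `|z|² ≤ |A| + 2`.

The iterates of `±a` have the form `x ± ya` with `x, y ∈ ℚ`, and the bounds for the two conjugates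
combine into conditions on `x` and `y` (`conjugate_integrality`, `conjugate_norm_bound`).
The archimedean condition for `f(±a)` leaves `|k| ≤ 4` and `|m| ≤ 8`; the conditions
for `f(f(±a))` eliminate every remaining pair outside the list (`finite_check`).
-/

namespace PCF

/-- The cubic polynomial map `z ↦ z³ + Az + B`. -/
def cubic (A B : ℂ) (z : ℂ) : ℂ := z ^ 3 + A * z + B

/-- The forward orbit of `z` under `f` is a finite set. -/
def FiniteOrbit (f : ℂ → ℂ) (z : ℂ) : Prop := (Set.range fun n : ℕ => f^[n] z).Finite

lemma FiniteOrbit.map {f : ℂ → ℂ} {z : ℂ} (h : FiniteOrbit f z) : FiniteOrbit f (f z) := by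
  refine Set.Finite.subset h ?_
  rintro _ ⟨n, rfl⟩
  exact ⟨n + 1, by simp⟩

/-- A point of finite orbit lies in no forward-invariant region on which `f` strictly increases
the size function `N`. -/
lemma not_escaping_of_finiteOrbit {Γ : Type*} [LinearOrder Γ] {f : ℂ → ℂ} (N : ℂ → Γ)
    (P : ℂ → Prop) (hP : ∀ z, P z → P (f z) ∧ N z < N (f z)) {z : ℂ} (hz : FiniteOrbit f z) :
    ¬ P z := by
  intro h0
  have hall : ∀ n, P (f^[n] z) := by
    intro n
    induction n with
    | zero => exact h0
    | succ n ih => rw [Function.iterate_succ_apply']; exact (hP _ ih).1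
  have hmono : StrictMono fun n : ℕ => N (f^[n] z) := by
    refine strictMono_nat_of_lt_succ fun n => ?_
    rw [Function.iterate_succ_apply']
    exact (hP _ (hall n)).2
  have hinj : Function.Injective fun n : ℕ => f^[n] z :=
    fun i j hij => hmono.injective (congrArg N hij)
  exact Set.infinite_range_of_injective hinj hz

lemma isIntegral_of_forall_valuationSubring {z : ℂ}
    (h : ∀ V : ValuationSubring ℂ, V.valuation z ≤ 1) : IsIntegral ℤ z := by
  have key := iInf_valuationSubring_superset (K := ℂ) (s := ∅)
  have hz : z ∈ (integralClosure (Subring.closure (∅ : Set ℂ)) ℂ).toSubring := by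
    rw [← key, Subring.mem_iInf]
    exact fun V => (V.1.valuation_le_one_iff z).1 (h V.1)
  -- The subring generated by `∅` is the image of `ℤ`, hence integral over `ℤ`.
  have : Algebra.IsIntegral ℤ (Subring.closure (∅ : Set ℂ)) := by
    refine ⟨fun x => ?_⟩
    obtain ⟨n, hn⟩ : ∃ n : ℤ, (n : ℂ) = x := by
      exact Subring.mem_bot.1 (Subring.closure_empty (R := ℂ) ▸ x.2)
    obtain rfl : (n : Subring.closure (∅ : Set ℂ)) = x := Subtype.ext (by simpa using hn)
    exact isIntegral_algebraMap (R := ℤ) (x := n)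
  exact isIntegral_trans (R := ℤ) (A := Subring.closure (∅ : Set ℂ)) z hz

lemma exists_int_of_isIntegral {q : ℚ} (h : IsIntegral ℤ (q : ℂ)) : ∃ n : ℤ, q = n := by
  have h2 : IsIntegral ℤ q := by
    have := (isIntegral_algebraMap_iff (R := ℤ) (A := ℚ) (B := ℂ) (x := q)
      (algebraMap ℚ ℂ).injective).1 (by simpa using h)
    exact this
  obtain ⟨n, hn⟩ := IsIntegrallyClosed.isIntegral_iff.1 h2
  exact ⟨n, by simpa using hn.symm⟩

/-- With `R = max(1, v a, v t)`, where `t³ = B`, every `z` with `v z > R` escapes. Hence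
`2B = f(a) + f(-a)` and `4a³ = f(-a) - f(a)` have valuation at most `R`, which forces
`v(2) R ≤ 1`. -/
lemma valuation_bounds {A B a : ℂ} (hA : A = -3 * a ^ 2)
    (h1 : FiniteOrbit (cubic A B) a) (h2 : FiniteOrbit (cubic A B) (-a))
    (V : ValuationSubring ℂ) :
    V.valuation (4 * B) ≤ 1 ∧ ∀ z, FiniteOrbit (cubic A B) z → V.valuation (2 * z) ≤ 1 := by
  obtain ⟨t, ht⟩ : ∃ t : ℂ, t ^ 3 = B := IsAlgClosed.exists_pow_nat_eq B (by norm_num)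
  set v := V.valuation with hv
  have hint : ∀ n : ℕ, v (n : ℂ) ≤ 1 := fun n => V.valuation_le_one (n : V)
  have hv2 : v 2 ≤ 1 := by simpa using hint 2
  have hv3 : v 3 ≤ 1 := by simpa using hint 3
  have hv4 : v 4 = v 2 * v 2 := by rw [← map_mul]; norm_num
  obtain ⟨r, hr1, hra, hrt, hr⟩ : ∃ r : ℂ, 1 ≤ v r ∧ v a ≤ v r ∧ v t ≤ v r ∧
      (r = 1 ∨ r = a ∨ r = t) := by
    rcases le_total (v a) (v t) with h | h
    · rcases le_total 1 (v t) with h' | h'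
      · exact ⟨t, h', h, le_rfl, by simp⟩
      · exact ⟨1, by simp, by simpa using h.trans h', by simpa using h', by simp⟩
    · rcases le_total 1 (v a) with h' | h'
      · exact ⟨a, h', le_rfl, h, by simp⟩
      · exact ⟨1, by simp, by simpa using h', by simpa using h.trans h', by simp⟩
  have hr0 : 0 < v r := lt_of_lt_of_le zero_lt_one hr1
  have hvA : v A ≤ v r ^ 2 := by
    rw [hA, map_mul, map_pow, Valuation.map_neg]
    calc v 3 * v a ^ 2 ≤ 1 * v r ^ 2 := by gcongr
      _ = _ := one_mul _
  have bound : ∀ z, FiniteOrbit (cubic A B) z → v z ≤ v r := by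
    intro z hz
    refine not_lt.1 (not_escaping_of_finiteOrbit v (fun z => v r < v z) ?_ hz)
    intro z hz
    have hz0 : 0 < v z := hr0.trans hz
    have hAz : v (A * z) < v (z ^ 3) := by
      rw [map_mul, map_pow, pow_succ]
      calc v A * v z ≤ v r ^ 2 * v z := by gcongr
        _ < v z ^ 2 * v z := by gcongr
    have hB : v B < v (z ^ 3) := by
      rw [← ht, map_pow, map_pow]
      exact lt_of_le_of_lt (pow_le_pow_left' hrt 3) (pow_lt_pow_left₀ hz hr0.le (by norm_num))
    have hf : v (cubic A B z) = v z ^ 3 := by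
      rw [cubic, add_assoc, Valuation.map_add_eq_of_lt_left, map_pow]
      exact v.map_add_lt hAz hB
    have hlt : v z < v (cubic A B z) := by
      rw [hf]
      exact lt_self_pow₀ (hr1.trans_lt hz) (by norm_num)
    exact ⟨hz.trans hlt, hlt⟩
  have b2 : v 2 * v B ≤ v r := by
    have := v.map_add_le (bound _ h1.map) (bound _ h2.map)
    rw [← map_mul]
    convert this using 2
    simp only [cubic]; ring
  have b4 : v 2 * v 2 * v a ^ 3 ≤ v r := by
    have := v.map_sub_le (bound _ h2.map) (bound _ h1.map)
    rw [← hv4, ← map_pow, ← map_mul]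
    convert this using 2
    simp only [cubic, hA]; ring
  have hR : v 2 * v r ≤ 1 := by
    rcases hr with rfl | rfl | rfl
    · simpa using hv2
    · have : (v 2 * v r) ^ 2 * v r ≤ 1 * v r := by
        calc _ = v 2 * v 2 * v r ^ 3 := by rw [mul_pow, sq, mul_assoc, ← pow_succ]
          _ ≤ v r := b4
          _ = _ := (one_mul _).symm
      exact (pow_le_one_iff (by norm_num)).1 (le_of_mul_le_mul_right this hr0)
    · have : (v 2 * v r) ^ 2 * v r ≤ 1 * v r := by
        calc _ = v 2 * (v 2 * v (r ^ 3)) := by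
              rw [map_pow, mul_pow, sq, mul_assoc, ← pow_succ, mul_assoc]
          _ ≤ 1 * v r := by rw [ht]; gcongr
      exact (pow_le_one_iff (by norm_num)).1 (le_of_mul_le_mul_right this hr0)
  refine ⟨?_, fun z hz => ?_⟩
  · rw [map_mul, hv4, mul_assoc]
    exact (mul_le_mul_right b2 _).trans hR
  · rw [map_mul]
    exact (mul_le_mul_right (bound z hz) _).trans hR

lemma norm_growth {A B z : ℂ} (hB : ‖B‖ ≤ ‖z‖) (hz : ‖A‖ + 2 < ‖z‖ ^ 2) :
    ‖z‖ < ‖cubic A B z‖ := by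
  have h1 : ‖z ^ 3‖ ≤ ‖cubic A B z‖ + ‖A * z‖ + ‖B‖ := by
    have : z ^ 3 = cubic A B z - A * z - B := by simp only [cubic]; ring
    rw [this]
    exact (norm_sub_le _ _).trans (by gcongr; exact norm_sub_le _ _)
  rw [norm_pow, norm_mul] at h1
  have hz0 : 0 < ‖z‖ := by
    by_contra h
    have : ‖z‖ = 0 := le_antisymm (not_lt.1 h) (norm_nonneg _)
    rw [this] at hz
    nlinarith [norm_nonneg A]
  nlinarith [mul_lt_mul_of_pos_left hz hz0]

lemma norm_sq_le_of_finiteOrbit {A B a : ℂ}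
    (h1 : FiniteOrbit (cubic A B) a) (h2 : FiniteOrbit (cubic A B) (-a))
    {z : ℂ} (hz : FiniteOrbit (cubic A B) z) : ‖z‖ ^ 2 ≤ ‖A‖ + 2 := by
  have key : ∀ w, FiniteOrbit (cubic A B) w → ‖B‖ ≤ ‖w‖ → ‖w‖ ^ 2 ≤ ‖A‖ + 2 := by
    intro w hw hBw
    by_contra hcon
    refine not_escaping_of_finiteOrbit (fun z => ‖z‖)
      (fun z => ‖B‖ ≤ ‖z‖ ∧ ‖A‖ + 2 < ‖z‖ ^ 2) ?_ hw ⟨hBw, not_le.1 hcon⟩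
    rintro z ⟨hz1, hz2⟩
    have := norm_growth hz1 hz2
    exact ⟨⟨hz1.trans this.le, hz2.trans (by gcongr)⟩, this⟩
  -- One of `f(a)`, `f(-a)` is at least as large as their mean `B`.
  have hmean : 2 * ‖B‖ ≤ ‖cubic A B a‖ + ‖cubic A B (-a)‖ := by
    have : cubic A B a + cubic A B (-a) = 2 * B := by simp only [cubic]; ring
    have h := norm_add_le (cubic A B a) (cubic A B (-a))
    rw [this] at h
    simpa using h
  have hB : ‖B‖ ^ 2 ≤ ‖A‖ + 2 := by
    rcases le_total ‖B‖ ‖cubic A B a‖ with h | h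
    · exact le_trans (by gcongr) (key _ h1.map h)
    · have h' : ‖B‖ ≤ ‖cubic A B (-a)‖ := by linarith
      exact le_trans (by gcongr) (key _ h2.map h')
  rcases le_total ‖B‖ ‖z‖ with h | h
  · exact key z hz h
  · exact le_trans (by gcongr) hB

/-- Iterating `f` stays inside `ℚ + ℚa`: here `s = a²`. -/
lemma cubic_step {A B s : ℚ} {a : ℂ} (hA : A = -3 * s) (hs : a ^ 2 = s) (x y : ℚ) :
    cubic A B (x + y * a) =
      ((x ^ 3 + 3 * x * y ^ 2 * s - 3 * s * x + B : ℚ) : ℂ) +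
      ((3 * x ^ 2 * y + y ^ 3 * s - 3 * s * y : ℚ) : ℂ) * a := by
  subst hA
  simp only [cubic]
  push_cast
  rw [← hs]
  ring

/-- If `2(x ± ya)` are algebraic integers, then `4x` and `(4ya)² = 16y²s` are integers. -/
lemma conjugate_integrality {s x y : ℚ} {a : ℂ} (hs : a ^ 2 = s)
    (h1 : IsIntegral ℤ (2 * (x + y * a))) (h2 : IsIntegral ℤ (2 * (x - y * a))) :
    (∃ n : ℤ, 4 * x = n) ∧ ∃ n : ℤ, 16 * y ^ 2 * s = n := by
  refine ⟨exists_int_of_isIntegral ?_, exists_int_of_isIntegral ?_⟩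
  · have e : ((4 * x : ℚ) : ℂ) = 2 * (x + y * a) + 2 * (x - y * a) := by push_cast; ring
    rw [e]
    exact h1.add h2
  · have e : ((16 * y ^ 2 * s : ℚ) : ℂ) = (2 * (x + y * a) - 2 * (x - y * a)) ^ 2 := by
      push_cast; rw [← hs]; ring
    rw [e]
    exact (h1.sub h2).pow 2

/-- The parallelogram law for the two conjugates `x ± ya`. -/
lemma conjugate_norm_bound {s x y : ℚ} {a : ℂ} {M : ℝ} (hs : a ^ 2 = s)
    (h1 : ‖(x + y * a : ℂ)‖ ^ 2 ≤ M) (h2 : ‖(x - y * a : ℂ)‖ ^ 2 ≤ M) :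
    (x : ℝ) ^ 2 + |(s : ℝ)| * (y : ℝ) ^ 2 ≤ M := by
  have hp := parallelogram_law_with_norm ℝ (x : ℂ) (y * a)
  have hx : ‖(x : ℂ)‖ ^ 2 = (x : ℝ) ^ 2 := by simp
  have hy : ‖(y * a : ℂ)‖ ^ 2 = |(s : ℝ)| * (y : ℝ) ^ 2 := by
    have : ‖a‖ ^ 2 = |(s : ℝ)| := by rw [← norm_pow, hs]; simp
    rw [norm_mul, mul_pow, this]; simp [mul_comm]
  nlinarith

/-- The arithmetic of `f(f(±a)) = (X ± Ya)/64` for `A = 3k/4`, `B = m/4`. -/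
lemma finite_check (k m : ℤ) (hk : |k| ≤ 4) (hm : |m| ≤ 8)
    (h1 : m ^ 2 + |k| ^ 3 ≤ 12 * |k| + 32)
    (h2 : 4 * (m ^ 3 - 3 * m * k ^ 3 + 12 * k * m + 16 * m) ^ 2
        + |k| * (6 * m ^ 2 * k - 2 * k ^ 4 + 24 * k ^ 2) ^ 2 ≤ 4096 * (3 * |k| + 8))
    (h3 : (16 : ℤ) ∣ m ^ 3 - 3 * m * k ^ 3 + 12 * k * m + 16 * m)
    (h4 : (1024 : ℤ) ∣ k * (6 * m ^ 2 * k - 2 * k ^ 4 + 24 * k ^ 2) ^ 2) :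
    (k, m) = (-4, 0) ∨ (k, m) = (-2, 0) ∨ (k, m) = (-1, 3) ∨ (k, m) = (-1, -3) ∨
      (k, m) = (0, 0) ∨ (k, m) = (2, 0) ∨ (k, m) = (4, 0) := by
  rw [abs_le] at hk hm
  have hk' : k ∈ Finset.Icc (-4 : ℤ) 4 := Finset.mem_Icc.2 hk
  have hm' : m ∈ Finset.Icc (-8 : ℤ) 8 := Finset.mem_Icc.2 hm
  clear hk hm
  revert h1 h2 h3 h4
  revert m
  revert k
  decide +kernel

/-- The classification in the integral coordinates `k = 4A/3`, `m = 4B`. Here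
`f(±a) = m/4 ± (k/2)a` and `f(f(±a)) = (X ± Ya)/64`, with `a² = -k/4`. -/
theorem int_classification (k m : ℤ) (a : ℂ) (ha : 3 * a ^ 2 + ((3 * k / 4 : ℚ) : ℂ) = 0)
    (h1 : FiniteOrbit (cubic ((3 * k / 4 : ℚ) : ℂ) ((m / 4 : ℚ) : ℂ)) a)
    (h2 : FiniteOrbit (cubic ((3 * k / 4 : ℚ) : ℂ) ((m / 4 : ℚ) : ℂ)) (-a)) :
    (k, m) = (-4, 0) ∨ (k, m) = (-2, 0) ∨ (k, m) = (-1, 3) ∨ (k, m) = (-1, -3) ∨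
      (k, m) = (0, 0) ∨ (k, m) = (2, 0) ∨ (k, m) = (4, 0) := by
  set A : ℚ := 3 * k / 4 with hAdef
  set B : ℚ := m / 4 with hBdef
  obtain ⟨s, hsdef⟩ : ∃ s : ℚ, s = -k / 4 := ⟨_, rfl⟩
  have hs : a ^ 2 = s := by
    have : (A : ℂ) = -3 * s := by rw [hAdef, hsdef]; push_cast; ring
    rw [this] at ha
    linear_combination ha / 3
  have hsn : (-a) ^ 2 = s := by rw [neg_sq, hs]
  have hA : A = -3 * s := by rw [hAdef, hsdef]; ring
  have hAc : (A : ℂ) = -3 * a ^ 2 := by rw [hs, hA]; push_cast; ring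
  have hAabs : ‖(A : ℂ)‖ = 3 * |(k : ℝ)| / 4 := by
    rw [hAdef]; push_cast; simp
  have hsabs : |(s : ℝ)| = |(k : ℝ)| / 4 := by
    rw [hsdef]; push_cast; rw [abs_div, abs_neg]; simp
  have hint : ∀ z, FiniteOrbit (cubic A B) z → IsIntegral ℤ (2 * z) := fun z hz =>
    isIntegral_of_forall_valuationSubring fun V => (valuation_bounds hAc h1 h2 V).2 z hz
  have step : ∀ (c : ℂ), c ^ 2 = s → FiniteOrbit (cubic A B) c → ∃ w : ℂ,
      FiniteOrbit (cubic A B) w ∧ w = ((m / 4 : ℚ) : ℂ) + ((k / 2 : ℚ) : ℂ) * c := by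
    intro c hc hfin
    refine ⟨_, hfin.map, ?_⟩
    have := cubic_step (B := B) hA hc 0 1
    simp only [Rat.cast_zero, zero_add, Rat.cast_one, one_mul] at this
    rw [this, hsdef]
    push_cast [hBdef]; ring
  obtain ⟨w, hw, hwe⟩ := step a hs h1
  obtain ⟨w', hw', hwe'⟩ := step (-a) hsn h2
  obtain ⟨X, hX⟩ : ∃ X : ℤ, X = m ^ 3 - 3 * m * k ^ 3 + 12 * k * m + 16 * m := ⟨_, rfl⟩
  obtain ⟨Y, hY⟩ : ∃ Y : ℤ, Y = 6 * m ^ 2 * k - 2 * k ^ 4 + 24 * k ^ 2 := ⟨_, rfl⟩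
  have step2 : ∀ (c w : ℂ), c ^ 2 = s → w = ((m / 4 : ℚ) : ℂ) + ((k / 2 : ℚ) : ℂ) * c →
      cubic A B w = ((X / 64 : ℚ) : ℂ) + ((Y / 64 : ℚ) : ℂ) * c := by
    intro c w hc hw
    rw [hw, cubic_step hA hc, hX, hY, hsdef, hBdef]
    push_cast; ring
  have hu := hw.map
  have hu' := hw'.map
  rw [step2 a w hs hwe] at hu
  rw [step2 (-a) w' hsn hwe', mul_neg, ← sub_eq_add_neg] at hu'
  rw [hwe] at hw
  rw [hwe', mul_neg, ← sub_eq_add_neg] at hw'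
  have n1 := conjugate_norm_bound hs (norm_sq_le_of_finiteOrbit h1 h2 hw)
    (norm_sq_le_of_finiteOrbit h1 h2 hw')
  have n2 := conjugate_norm_bound hs (norm_sq_le_of_finiteOrbit h1 h2 hu)
    (norm_sq_le_of_finiteOrbit h1 h2 hu')
  obtain ⟨⟨i, hi⟩, j, hj⟩ := conjugate_integrality hs (hint _ hu) (hint _ hu')
  rw [hsabs, hAabs] at n1 n2
  have c1 : m ^ 2 + |k| ^ 3 ≤ 12 * |k| + 32 := by
    have e : (k : ℝ) ^ 2 = |(k : ℝ)| ^ 2 := (sq_abs _).symm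
    push_cast at n1
    rw [div_pow (k : ℝ), e] at n1
    have : (m : ℝ) ^ 2 + |(k : ℝ)| ^ 3 ≤ 12 * |(k : ℝ)| + 32 := by linarith
    exact_mod_cast this
  have c2 : 4 * X ^ 2 + |k| * Y ^ 2 ≤ 4096 * (3 * |k| + 8) := by
    push_cast at n2
    have : 4 * (X : ℝ) ^ 2 + |(k : ℝ)| * (Y : ℝ) ^ 2 ≤ 4096 * (3 * |(k : ℝ)| + 8) := by linarith
    exact_mod_cast this
  have c3 : (16 : ℤ) ∣ X := ⟨i, by
    have : (X : ℚ) = 16 * i := by linarith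
    exact_mod_cast this⟩
  have c4 : (1024 : ℤ) ∣ k * Y ^ 2 := ⟨-j, by
    have : (k : ℚ) * Y ^ 2 = 1024 * -j := by rw [← hj, hsdef]; ring
    exact_mod_cast this⟩
  have hk : |k| ≤ 4 := by
    by_contra! h
    nlinarith [sq_nonneg m, mul_nonneg (abs_nonneg k) (sq_nonneg (|k| - 5)),
      mul_nonneg (abs_nonneg k) (sub_nonneg.2 (Int.add_one_le_iff.2 h))]
  have hm : |m| ≤ 8 := by
    have : 0 ≤ |k| ^ 3 := by positivity
    by_contra! h
    nlinarith [sq_abs m]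
  rw [hX] at c2 c3
  rw [hY] at c2 c4
  exact finite_check k m hk hm c1 c2 c3 c4

/-- If `A, B ∈ ℚ` and `f(z) = z³ + Az + B` is post-critically finite as
a map `ℂ → ℂ` (every root of `3z² + A` has finite forward orbit), then `(A, B)` is one of
the seven pairs `(-3,0)`, `(-3/2,0)`, `(-3/4,3/4)`, `(-3/4,-3/4)`, `(0,0)`, `(3/2,0)`,
`(3,0)`. -/
theorem rational_pcf_cubic_classification (A B : ℚ)
    (hpcf : ∀ z : ℂ, 3 * z ^ 2 + (A : ℂ) = 0 →
      (Set.range fun n : ℕ => (fun w : ℂ => w ^ 3 + (A : ℂ) * w + (B : ℂ))^[n] z).Finite) :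
    (A, B) = (-3, 0) ∨ (A, B) = (-3/2, 0) ∨ (A, B) = (-3/4, 3/4) ∨
      (A, B) = (-3/4, -3/4) ∨ (A, B) = (0, 0) ∨ (A, B) = (3/2, 0) ∨ (A, B) = (3, 0) := by
  obtain ⟨a, ha⟩ : ∃ a : ℂ, a ^ 2 = -A / 3 := IsAlgClosed.exists_pow_nat_eq _ (by norm_num)
  have ha3 : 3 * a ^ 2 + (A : ℂ) = 0 := by rw [ha]; ring
  have h1 : FiniteOrbit (cubic A B) a := hpcf a ha3
  have h2 : FiniteOrbit (cubic A B) (-a) := hpcf (-a) (by rw [neg_sq]; exact ha3)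
  have hA : (A : ℂ) = -3 * a ^ 2 := by linear_combination ha3
  obtain ⟨m, hm⟩ : ∃ m : ℤ, 4 * B = m := exists_int_of_isIntegral (by
    push_cast
    exact isIntegral_of_forall_valuationSubring fun V => (valuation_bounds hA h1 h2 V).1)
  obtain ⟨k, hk⟩ : ∃ k : ℤ, 4 * A / 3 = k := exists_int_of_isIntegral (by
    have := (isIntegral_of_forall_valuationSubring
      fun V => (valuation_bounds hA h1 h2 V).2 a h1).pow 2 |>.neg
    convert this using 1
    push_cast; rw [hA]; ring)
  obtain rfl : A = 3 * k / 4 := by linarith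
  obtain rfl : B = m / 4 := by linarith
  simp only [Prod.mk.injEq]
  rcases int_classification k m a ha3 h1 h2 with h | h | h | h | h | h | h <;>
  · obtain ⟨rfl, rfl⟩ := Prod.mk.inj h
    norm_num

end PCF
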